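/- Let A be a principal ideal domain containing infinitely many pairwise nonassociate irreducible elements (i.e., there is an infinite set of irreducible elements of A no two of which are associates). Then every maximal ideal of the polynomial ring A[x] has height 2. -/

import Mathlib

/-!
A PID with infinitely many nonassociate irreducibles is a Jacobson ring: nonzero primes are maximal,
and an element of every maximal ideal is divisible by infinitely many nonassociate irreducibles,
hence is zero by unique factorization. By the general Nullstellensatz for Jacobson rings, a maximal
ideal `M` of `A[X]` then contracts to a maximal ideal `p` of `A`. Since `A` has an irreducible
element, it is not a field, so `p` has height `1`. As `A` is Noetherian,
`M` has height `height p + 1 = 2`.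
-/

open Polynomial

/-- By unique factorization, a nonzero element has only finitely many irreducible divisors up to
associates. -/
theorem eq_zero_of_infinite_irreducible_dvd {A : Type*} [CommRing A] [IsDomain A]
    [UniqueFactorizationMonoid A] {S : Set A} (hinf : S.Infinite)
    (hirr : ∀ p ∈ S, Irreducible p)
    (hassoc : ∀ p ∈ S, ∀ q ∈ S, p ≠ q → ¬ Associated p q)
    {x : A} (hx : ∀ p ∈ S, p ∣ x) : x = 0 := by
  classical
  by_contra hx0
  have key : ∀ p ∈ S, ∃ q ∈ UniqueFactorizationMonoid.factors x, Associated p q := fun p hp =>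
    UniqueFactorizationMonoid.exists_mem_factors_of_dvd hx0 (hirr p hp) (hx p hp)
  choose! f hf hfa using key
  refine hinf (Set.Finite.of_finite_image (f := f)
    ((UniqueFactorizationMonoid.factors x).toFinset.finite_toSet.subset ?_) ?_)
  · rintro _ ⟨p, hp, rfl⟩
    simpa using hf p hp
  · intro p hp q hq hpq
    by_contra hne
    have hqa := hfa q hq
    rw [← hpq] at hqa
    exact hassoc p hp q hq hne ((hfa p hp).trans hqa.symm)

theorem isJacobsonRing_of_infinite_irreducibles {A : Type*} [CommRing A] [IsDomain A]
    [IsPrincipalIdealRing A] {S : Set A} (hinf : S.Infinite)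
    (hirr : ∀ p ∈ S, Irreducible p)
    (hassoc : ∀ p ∈ S, ∀ q ∈ S, p ≠ q → ¬ Associated p q) : IsJacobsonRing A := by
  rw [isJacobsonRing_iff_prime_eq]
  intro P hP
  by_cases hbot : P = ⊥
  · subst hbot
    refine le_antisymm (fun x hx => ?_) Ideal.le_jacobson
    rw [Ideal.mem_bot]
    refine eq_zero_of_infinite_irreducible_dvd hinf hirr hassoc fun p hp => ?_
    rw [← Ideal.mem_span_singleton]
    exact Ideal.mem_sInf.mp hx
      ⟨bot_le, PrincipalIdealRing.isMaximal_of_irreducible (hirr p hp)⟩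
  · exact Ideal.jacobson_eq_self_of_isMaximal (H := IsPrime.to_maximal_ideal hbot)

theorem maximal_height_two_of_infinitely_many_irreducibles
    (A : Type*) [CommRing A] [IsDomain A] [IsPrincipalIdealRing A]
    (h : ∃ S : Set A, S.Infinite ∧ (∀ p ∈ S, Irreducible p) ∧
      ∀ p ∈ S, ∀ q ∈ S, p ≠ q → ¬ Associated p q)
    (M : Ideal A[X]) (hM : M.IsMaximal) :
    Order.height (⟨M, hM.isPrime⟩ : PrimeSpectrum A[X]) = 2 := by
  obtain ⟨S, hinf, hirr, hassoc⟩ := h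
  have hJ : IsJacobsonRing A := isJacobsonRing_of_infinite_irreducibles hinf hirr hassoc
  obtain ⟨a, ha⟩ := hinf.nonempty
  have hnf : ¬ IsField A := fun hF => by
    obtain ⟨b, hb⟩ := hF.mul_inv_cancel (hirr a ha).ne_zero
    exact (hirr a ha).not_isUnit (IsUnit.of_mul_eq_one b hb)
  have hmax : (M.under A).IsMaximal :=
    Polynomial.isMaximal_comap_C_of_isJacobsonRing M
  have h1 : (M.under A).height = 1 :=
    IsPrincipalIdealRing.height_eq_one_of_isMaximal (M.under A) hnf
  rw [← PrimeSpectrum.height_eq_orderHeight]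
  change M.height = 2
  rw [Polynomial.height_eq_height_add_one (M.under A) M, h1]
  rfl
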